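/- If G is a connected, claw-free finite simple graph, then the positive semidefinite zero forcing number of G equals the standard zero forcing number of G, i.e., Z_+(G) = Z(G). -/

import Mathlib

open SimpleGraph

/-- The standard color change rule: a blue vertex `u ∈ S` with exactly one white
neighbor `v` can force `v` to become blue. -/
def StdStep {V : Type*} (G : SimpleGraph V) (S : Set V) (u v : V) : Prop :=
  u ∈ S ∧ v ∉ S ∧ G.Adj u v ∧ ∀ w : V, G.Adj u w → w ∉ S → w = v

/-- The positive semidefinite color change rule: a blue vertex `u ∈ S` can force a
white vertex `v` if `v` is the unique neighbor of `u` in the connected component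
containing `v` of the subgraph induced on the white vertices `Sᶜ`. -/
def PSDStep {V : Type*} (G : SimpleGraph V) (S : Set V) (u v : V) : Prop :=
  u ∈ S ∧ G.Adj u v ∧ ∃ hv : v ∈ (Sᶜ : Set V),
    ∀ w : V, ∀ hw : w ∈ (Sᶜ : Set V), G.Adj u w →
      (G.induce (Sᶜ : Set V)).Reachable ⟨v, hv⟩ ⟨w, hw⟩ → w = v

/-- `Derives step B S` means the blue set `S` is obtainable from the initial blue
set `B` by iterated application of the color change rule `step`. -/
inductive Derives {V : Type*} (step : Set V → V → V → Prop) : Set V → Set V → Prop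
  | refl (S : Set V) : Derives step S S
  | tail {S T : Set V} {u v : V} : Derives step S T → step T u v → Derives step S (insert v T)

/-- `B` is a standard zero forcing set of `G` if iterating the standard color
change rule from `B` colors all vertices blue. -/
def IsStdForcingSet {V : Type*} (G : SimpleGraph V) (B : Set V) : Prop :=
  Derives (StdStep G) B Set.univ

/-- `B` is a positive semidefinite zero forcing set of `G` if iterating the
positive semidefinite color change rule from `B` colors all vertices blue. -/
def IsPSDForcingSet {V : Type*} (G : SimpleGraph V) (B : Set V) : Prop :=
  Derives (PSDStep G) B Set.univ

/-- The standard zero forcing number `Z(G)`. -/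
noncomputable def Z {V : Type*} (G : SimpleGraph V) : ℕ :=
  sInf {n : ℕ | ∃ B : Set V, IsStdForcingSet G B ∧ B.ncard = n}

/-- The positive semidefinite zero forcing number `Z₊(G)`. -/
noncomputable def Zplus {V : Type*} (G : SimpleGraph V) : ℕ :=
  sInf {n : ℕ | ∃ B : Set V, IsPSDForcingSet G B ∧ B.ncard = n}

/-- A graph is claw-free if no induced subgraph is isomorphic to `K_{1,3}`. -/
def ClawFree {V : Type*} (G : SimpleGraph V) : Prop :=
  ¬ ∃ s : Set V, Nonempty (G.induce s ≃g completeBipartiteGraph (Fin 1) (Fin 3))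

/-- `S` is a minimum positive semidefinite zero forcing set of `G`. -/
def IsMinPSDForcingSet {V : Type*} (G : SimpleGraph V) (S : Set V) : Prop :=
  IsPSDForcingSet G S ∧ ∀ B : Set V, IsPSDForcingSet G B → S.ncard ≤ B.ncard

/-!
A positive semidefinite forcing set `B` is a standard forcing set as soon as its white
vertices induce a connected subgraph of every component of `G`: if a blue `y` forces its only white
neighbor `v`, claw-freeness at `v` makes the other white neighbors of `v` a clique, so the white set
stays connected after `v` turns blue, and every positive semidefinite force is a standard one.

To find such a `B`, let `B` range over the minimum positive semidefinite forcing sets and `W` over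
the white sets that are connected in each component of `G`, and take `W` as large as possible. If a
blue `y` has a unique neighbor `v` in some white component, the colors of `y` and `v` can be
exchanged. If a blue vertex touched both `W` and another white component `C`, such exchanges would
eat up `C` until a neighbor of `W` turned white and `W` could be enlarged. Hence all vertices near
`W` are blue, and a vertex at distance two from `W` would be redundant in `B`. So `W` is all of the
white set.
-/

section

variable {V : Type*} {G : SimpleGraph V}

namespace Derives

variable {step step' : Set V → V → V → Prop} {S T : Set V}

theorem head {u v : V} (h : step S u v) (hd : Derives step (insert v S) T) : Derives step S T := by
  generalize hR : insert v S = R at hd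
  induction hd with
  | refl => exact hR ▸ .tail (.refl S) h
  | tail _ hstep ih => exact .tail ih hstep

theorem imp (h : ∀ S u v, step S u v → step' S u v) (hd : Derives step S T) :
    Derives step' S T := by
  induction hd with
  | refl => exact .refl _
  | tail _ hstep ih => exact ih.tail (h _ _ _ hstep)

theorem exists_superset (hstep : ∀ S S' u v, step S u v → S ⊆ S' → v ∉ S' → step S' u v)
    {S' : Set V} (hS : S ⊆ S') (hd : Derives step S T) : ∃ T', T ⊆ T' ∧ Derives step S' T' := by
  induction hd with
  | refl => exact ⟨S', hS, .refl S'⟩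
  | @tail T _ v _ h ih =>
    obtain ⟨T', hT, hd'⟩ := ih
    by_cases hv : v ∈ T'
    · exact ⟨T', Set.insert_subset hv hT, hd'⟩
    · exact ⟨insert v T', Set.insert_subset_insert hT, hd'.tail (hstep _ _ _ _ h hT hv)⟩

theorem exists_first_step {W : Set V} (hd : Derives step S T) (hS : Disjoint W S)
    (hT : ¬ Disjoint W T) : ∃ R u v, step R u v ∧ Disjoint W R ∧ v ∈ W := by
  induction hd with
  | refl => exact absurd hS hT
  | @tail T u v _ h ih =>
    by_cases hWT : Disjoint W T
    · refine ⟨T, u, v, h, hWT, ?_⟩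
      by_contra hv
      exact hT (Set.disjoint_insert_right.2 ⟨hv, hWT⟩)
    · exact ih hWT

end Derives

theorem PSDStep.mono {S S' : Set V} {u v : V} (h : PSDStep G S u v) (hS : S ⊆ S') (hv : v ∉ S') :
    PSDStep G S' u v := by
  obtain ⟨hu, huv, _, huniq⟩ := h
  have hcompl : S'ᶜ ⊆ Sᶜ := Set.compl_subset_compl.2 hS
  exact ⟨hS hu, huv, hv, fun w hw huw hvw =>
    huniq w (hcompl hw) huw (hvw.map (induceHomOfLE G hcompl).toHom)⟩

theorem StdStep.psdStep {S : Set V} {u v : V} (h : StdStep G S u v) : PSDStep G S u v :=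
  let ⟨hu, hv, huv, huniq⟩ := h
  ⟨hu, huv, hv, fun w hw huw _ => huniq w huw hw⟩

theorem IsStdForcingSet.isPSDForcingSet {B : Set V} (hB : IsStdForcingSet G B) :
    IsPSDForcingSet G B :=
  hB.imp fun _ _ _ => StdStep.psdStep

theorem IsPSDForcingSet.mono {B B' : Set V} (hB : IsPSDForcingSet G B) (h : B ⊆ B') :
    IsPSDForcingSet G B' := by
  obtain ⟨T, hT, hd⟩ :=
    Derives.exists_superset (step := PSDStep G) (fun _ _ _ _ => PSDStep.mono) h hB
  rwa [Set.univ_subset_iff.1 hT] at hd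

theorem Z_le_ncard {B : Set V} (hB : IsStdForcingSet G B) : Z G ≤ B.ncard :=
  Nat.sInf_le ⟨B, hB, rfl⟩

theorem Zplus_le_ncard {B : Set V} (hB : IsPSDForcingSet G B) : Zplus G ≤ B.ncard :=
  Nat.sInf_le ⟨B, hB, rfl⟩

theorem exists_isPSDForcingSet_ncard_eq_Zplus (G : SimpleGraph V) :
    ∃ B, IsPSDForcingSet G B ∧ B.ncard = Zplus G :=
  Nat.sInf_mem (s := {n | ∃ B, IsPSDForcingSet G B ∧ B.ncard = n}) ⟨_, Set.univ, .refl _, rfl⟩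

theorem exists_isStdForcingSet_ncard_eq_Z (G : SimpleGraph V) :
    ∃ B, IsStdForcingSet G B ∧ B.ncard = Z G :=
  Nat.sInf_mem (s := {n | ∃ B, IsStdForcingSet G B ∧ B.ncard = n}) ⟨_, Set.univ, .refl _, rfl⟩

theorem Zplus_le_Z (G : SimpleGraph V) : Zplus G ≤ Z G := by
  obtain ⟨B, hB, hcard⟩ := exists_isStdForcingSet_ncard_eq_Z G
  exact hcard ▸ Zplus_le_ncard hB.isPSDForcingSet

theorem IsMinPSDForcingSet.ncard_eq_Zplus {B : Set V} (hB : IsMinPSDForcingSet G B) :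
    B.ncard = Zplus G := by
  obtain ⟨B₀, hB₀, hcard⟩ := exists_isPSDForcingSet_ncard_eq_Zplus G
  exact le_antisymm (hcard ▸ hB.2 B₀ hB₀) (Zplus_le_ncard hB.1)

theorem exists_isMinPSDForcingSet (G : SimpleGraph V) : ∃ B, IsMinPSDForcingSet G B := by
  obtain ⟨B, hB, hcard⟩ := exists_isPSDForcingSet_ncard_eq_Zplus G
  exact ⟨B, hB, fun _ hB' => hcard ▸ Zplus_le_ncard hB'⟩

theorem ClawFree.exists_adj (hclaw : ClawFree G) {v : V} {f : Fin 3 → V}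
    (hf : Function.Injective f) (hv : ∀ i, G.Adj v (f i)) : ∃ i j, G.Adj (f i) (f j) := by
  by_contra! hindep
  have claw : completeBipartiteGraph (Fin 1) (Fin 3) ↪g G :=
    { toFun := Sum.elim (fun _ => v) f
      inj' := (Function.injective_of_subsingleton _).sumElim hf fun _ i => (hv i).ne
      map_rel_iff' := by
        rintro (_ | i) (_ | j) <;> simp [hv, (hv _).symm, hindep] }
  exact hclaw ⟨Set.range claw, ⟨claw.isoInduceRange.symm⟩⟩

/-- `v` is the only neighbor of `u` in `W`. If `u` is blue and `W` is a union of components of the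
white graph, this lets `u` force `v` by the positive semidefinite rule. -/
structure IsUniqueNeighborIn (G : SimpleGraph V) (W : Set V) (u v : V) : Prop where
  mem : v ∈ W
  adj : G.Adj u v
  eq_of_adj : ∀ w ∈ W, G.Adj u w → w = v

theorem ClawFree.isClique_inter_neighborSet (hclaw : ClawFree G) {W : Set V} {y v : V}
    (hyW : y ∉ W) (hv : IsUniqueNeighborIn G W y v) : G.IsClique (W ∩ G.neighborSet v) := by
  rintro d ⟨hd, hvd⟩ e ⟨he, hve⟩ hde
  rw [mem_neighborSet] at hvd hve
  by_contra hnadj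
  have hyd : ¬ G.Adj y d := fun h => hvd.ne' (hv.eq_of_adj d hd h)
  have hye : ¬ G.Adj y e := fun h => hve.ne' (hv.eq_of_adj e he h)
  have hinj : Function.Injective ![y, d, e] := by
    have hyd' : y ≠ d := fun h => hyW (h ▸ hd)
    have hye' : y ≠ e := fun h => hyW (h ▸ he)
    intro i j hij
    fin_cases i <;> fin_cases j <;> simp_all
  obtain ⟨i, j, hij⟩ := hclaw.exists_adj (v := v) hinj fun i => by
    fin_cases i
    exacts [hv.adj.symm, hvd, hve]
  fin_cases i <;> fin_cases j <;> simp_all [G.adj_comm]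

theorem mem_of_reachable_of_forall_adj {K : Set V} (hK : ∀ x ∈ K, ∀ y, G.Adj x y → y ∈ K) {a b : V}
    (hab : G.Reachable a b) (ha : a ∈ K) : b ∈ K := by
  obtain ⟨p⟩ := hab
  by_contra hb
  obtain ⟨d, _, hfst, hsnd⟩ := p.exists_boundary_dart K ha hb
  exact hsnd (hK _ hfst _ d.adj)

/-- `W` meets every connected component of `G` in a set inducing a connected (or empty) subgraph. -/
def ComponentwiseConnected (G : SimpleGraph V) (W : Set V) : Prop :=
  ∀ a b : W, G.Reachable a b → (G.induce W).Reachable a b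

namespace ComponentwiseConnected

variable {W : Set V}

theorem empty (G : SimpleGraph V) : ComponentwiseConnected G ∅ :=
  fun a => a.2.elim

theorem insert (hW : ComponentwiseConnected G W) {u : V}
    (hu : ∀ x ∈ W, G.Reachable u x → ∃ z ∈ W, G.Adj u z) :
    ComponentwiseConnected G (insert u W) := by
  let ι : G.induce W →g G.induce (Insert.insert u W) :=
    (induceHomOfLE G (Set.subset_insert u W)).toHom
  have hub : ∀ b (hb : b ∈ W), G.Reachable u b →
      (G.induce (Insert.insert u W)).Reachable ⟨u, .inl rfl⟩ ⟨b, .inr hb⟩ := by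
    intro b hb hreach
    obtain ⟨z, hz, huz⟩ := hu b hb hreach
    have hzb : (G.induce W).Reachable ⟨z, hz⟩ ⟨b, hb⟩ := hW _ _ (huz.symm.reachable.trans hreach)
    have huz' : (G.induce (Insert.insert u W)).Adj ⟨u, .inl rfl⟩ ⟨z, .inr hz⟩ := huz
    exact huz'.reachable.trans (hzb.map ι)
  rintro ⟨a, rfl | ha⟩ ⟨b, rfl | hb⟩ hab
  · rfl
  · exact hub b hb hab
  · exact (hub a ha hab.symm).symm
  · exact (hW ⟨a, ha⟩ ⟨b, hb⟩ hab).map ι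

theorem diff_singleton (hW : ComponentwiseConnected G W) {v : V}
    (hv : G.IsClique (W ∩ G.neighborSet v)) : ComponentwiseConnected G (W \ {v}) := by
  rintro ⟨a, haW, hav⟩ ⟨b, hbW, hbv⟩ hab
  -- Follow a walk in `W`, waiting at a neighbor of `v` while the walk visits `v`.
  let K : Set W := {c | ∃ d : ↥(W \ {v}), (G.induce (W \ {v})).Reachable ⟨a, haW, hav⟩ d ∧
    (d.1 = c ∨ c = v ∧ G.Adj v d)}
  have hK : ∀ c ∈ K, ∀ c', (G.induce W).Adj c c' → c' ∈ K := by
    rintro ⟨c, hcW⟩ ⟨⟨d, hdW, hdv⟩, had, hdc⟩ ⟨c', hc'W⟩ hcc'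
    have extend : c' ≠ v → G.Adj d c' → (⟨c', hc'W⟩ : W) ∈ K := fun hc'v hdc' =>
      have hadj : (G.induce (W \ {v})).Adj ⟨d, hdW, hdv⟩ ⟨c', hc'W, hc'v⟩ := hdc'
      ⟨⟨c', hc'W, hc'v⟩, had.trans hadj.reachable, .inl rfl⟩
    change G.Adj c c' at hcc'
    obtain rfl | ⟨rfl, hvd⟩ := hdc
    · by_cases hc'v : c' = v
      · exact ⟨⟨d, hdW, hdv⟩, had, .inr ⟨hc'v, hc'v ▸ hcc'.symm⟩⟩
      · exact extend hc'v hcc'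
    · by_cases hdc' : d = c'
      · exact ⟨⟨d, hdW, hdv⟩, had, .inl hdc'⟩
      · exact extend hcc'.ne' (hv ⟨hdW, hvd⟩ ⟨hc'W, hcc'⟩ hdc')
  obtain ⟨d, had, rfl | ⟨hbv', _⟩⟩ : ⟨b, hbW⟩ ∈ K :=
    mem_of_reachable_of_forall_adj hK (hW ⟨a, haW⟩ ⟨b, hbW⟩ hab)
      ⟨⟨a, haW, hav⟩, .rfl, .inl rfl⟩
  · exact had
  · exact absurd hbv' hbv

theorem image_supp {S : Set V} (c : (G.induce S).ConnectedComponent) :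
    ComponentwiseConnected G (Subtype.val '' c.supp) := by
  rintro ⟨_, a, ha, rfl⟩ ⟨_, b, hb, rfl⟩ _
  let ι : c.toSimpleGraph →g G.induce (Subtype.val '' c.supp) :=
    { toFun := fun x => ⟨x.1, Set.mem_image_of_mem _ x.2⟩
      map_rel' := id }
  exact (c.connected_toSimpleGraph.preconnected ⟨a, ha⟩ ⟨b, hb⟩).map ι

end ComponentwiseConnected

/-- `W` is a union of connected components of the white graph `G - B`. -/
structure WhiteClosed (G : SimpleGraph V) (B W : Set V) : Prop where
  subset_compl : W ⊆ Bᶜ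
  mem_of_adj : ∀ x ∈ W, ∀ y ∉ B, G.Adj x y → y ∈ W

namespace WhiteClosed

variable {B W : Set V}

theorem compl (G : SimpleGraph V) (B : Set V) : WhiteClosed G B Bᶜ :=
  ⟨subset_rfl, fun _ _ _ hy _ => hy⟩

theorem mem_of_reachable (hW : WhiteClosed G B W) {a b : ↥Bᶜ}
    (hab : (G.induce Bᶜ).Reachable a b) (ha : a.1 ∈ W) : b.1 ∈ W :=
  mem_of_reachable_of_forall_adj (K := Subtype.val ⁻¹' W)
    (fun x hx y hxy => hW.mem_of_adj x hx y y.2 hxy) hab ha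

theorem image_supp (c : (G.induce Bᶜ).ConnectedComponent) :
    WhiteClosed G B (Subtype.val '' c.supp) where
  subset_compl := by
    rintro _ ⟨x, _, rfl⟩
    exact x.2
  mem_of_adj := by
    rintro _ ⟨x, hx, rfl⟩ y hy hxy
    have hxy' : (G.induce Bᶜ).Adj x ⟨y, hy⟩ := hxy
    exact ⟨⟨y, hy⟩, c.mem_supp_of_adj_mem_supp hx hxy', rfl⟩

theorem exchange (hW : WhiteClosed G B W) {u v : V} (hv : IsUniqueNeighborIn G W u v) :
    WhiteClosed G (insert v (B \ {u})) (W \ {v}) where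
  subset_compl := by
    rintro x ⟨hx, hxv⟩ (rfl | hxB)
    · exact hxv rfl
    · exact hW.subset_compl hx hxB.1
  mem_of_adj := by
    rintro x ⟨hx, hxv⟩ y hy hxy
    have hyv : y ≠ v := fun h => hy (.inl h)
    refine ⟨hW.mem_of_adj x hx y (fun hyB => hy (.inr ⟨hyB, ?_⟩)) hxy, hyv⟩
    rintro rfl
    exact hxv (hv.eq_of_adj x hx hxy.symm)

theorem psdStep (hW : WhiteClosed G B W) {u v : V} (hu : u ∈ B)
    (hv : IsUniqueNeighborIn G W u v) : PSDStep G B u v :=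
  ⟨hu, hv.adj, hW.subset_compl hv.mem, fun w _ huw hvw =>
    hv.eq_of_adj w (hW.mem_of_reachable hvw hv.mem) huw⟩

end WhiteClosed

namespace IsPSDForcingSet

variable {B W : Set V}

theorem exists_isUniqueNeighborIn (hB : IsPSDForcingSet G B) (hW : WhiteClosed G B W)
    (hconn : ComponentwiseConnected G W) (hne : W.Nonempty) :
    ∃ y ∈ B, ∃ v, IsUniqueNeighborIn G W y v := by
  obtain ⟨S, y, v, ⟨hy, hyv, _, huniq⟩, hWS, hv⟩ :=
    Derives.exists_first_step hB (Set.disjoint_left.2 fun _ h => hW.subset_compl h)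
      (by simpa using hne.ne_empty)
  have hsub : W ⊆ Sᶜ := Set.disjoint_left.1 hWS
  have hyB : y ∈ B := by
    by_contra hyB
    exact hsub (hW.mem_of_adj v hv y hyB hyv.symm) hy
  refine ⟨y, hyB, v, hv, hyv, fun w hw hyw => huniq w (hsub hw) hyw ?_⟩
  have hvw : (G.induce W).Reachable ⟨v, hv⟩ ⟨w, hw⟩ :=
    hconn _ _ (hyv.symm.reachable.trans hyw.reachable)
  exact hvw.map (induceHomOfLE G hsub).toHom

-- When only `B'` is blue, no white path joins `b` to `W`, so `a` can force `b` back at once.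
theorem of_subset_insert {B' : Set V} {a b : V} (hB : IsPSDForcingSet G B)
    (hW : WhiteClosed G B W) (hsub : B ⊆ insert b B') (ha : a ∈ B') (hab : G.Adj a b)
    (hbW : b ∉ W) (hbB' : b ∉ B') (hb : ∀ w ∈ W, G.Adj b w → w ∈ B')
    (haB : ∀ w ∉ W, G.Adj a w → w ∈ B) : IsPSDForcingSet G B' := by
  have eq_b : ∀ {x}, x ∈ B → x ∉ B' → x = b := fun hx hx' => (hsub hx).resolve_right hx'
  have hclosed : WhiteClosed G B' (W ∪ B')ᶜ :=
    { subset_compl := Set.compl_subset_compl.2 Set.subset_union_right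
      mem_of_adj := by
        rintro x hx y hyB' hxy (hyW | hyB'')
        · have hxB : x ∈ B := by
            by_contra hxB
            exact hx (.inl (hW.mem_of_adj y hyW x hxB hxy.symm))
          obtain rfl := eq_b hxB fun h => hx (.inr h)
          exact hyB' (hb y hyW hxy)
        · exact hyB' hyB'' }
  have huniq : IsUniqueNeighborIn G (W ∪ B')ᶜ a b :=
    { mem := by simp [hbW, hbB']
      adj := hab
      eq_of_adj := fun w hw haw =>
        eq_b (haB w (fun h => hw (.inl h)) haw) fun h => hw (.inr h) }
  exact Derives.head (hclosed.psdStep ha huniq) (hB.mono hsub)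

theorem exchange (hB : IsPSDForcingSet G B) (hW : WhiteClosed G B W) {u v : V} (hu : u ∈ B)
    (hv : IsUniqueNeighborIn G W u v) : IsPSDForcingSet G (insert v (B \ {u})) := by
  refine hB.of_subset_insert hW (a := v) (b := u) ?_ (Set.mem_insert _ _) hv.adj.symm
    (fun h => hW.subset_compl h hu) (by simp [hv.adj.ne]) ?_ ?_
  · rw [Set.insert_comm, Set.insert_sdiff_singleton]
    exact (Set.subset_insert u B).trans (Set.subset_insert v _)
  · exact fun w hw huw => .inl (hv.eq_of_adj w hw huw)
  · intro w hw hvw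
    by_contra hwB
    exact hw (hW.mem_of_adj v hv.mem w hwB hvw)

theorem isStdForcingSet [Finite V] (hclaw : ClawFree G) (hB : IsPSDForcingSet G B)
    (hconn : ComponentwiseConnected G Bᶜ) : IsStdForcingSet G B := by
  induction hn : Bᶜ.ncard generalizing B with
  | zero =>
    obtain rfl : B = Set.univ := Set.compl_empty_iff.1 ((Set.ncard_eq_zero).1 hn)
    exact .refl _
  | succ n ih =>
    have hne : Bᶜ.Nonempty := Set.nonempty_of_ncard_ne_zero (by omega)
    obtain ⟨y, hy, v, hv⟩ := hB.exists_isUniqueNeighborIn (.compl G B) hconn hne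
    have hcompl : (insert v B)ᶜ = Bᶜ \ {v} := by
      rw [← Set.union_singleton, Set.compl_union]
      rfl
    refine Derives.head ⟨hy, hv.mem, hv.adj, fun w hyw hw => hv.eq_of_adj w hw hyw⟩
      (ih (hB.mono (Set.subset_insert v B)) ?_ ?_)
    · exact hcompl ▸ hconn.diff_singleton
        (hclaw.isClique_inter_neighborSet (Set.notMem_compl_iff.2 hy) hv)
    · rw [hcompl, Set.ncard_sdiff_singleton_of_mem hv.mem, hn, Nat.add_sub_cancel]

end IsPSDForcingSet

/-- Some positive semidefinite zero forcing set of the same size as `B` leaves white all of `A` and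
a further vertex adjacent to `A`; this is the enlargement step for `A`. -/
def CanExtendWhite (G : SimpleGraph V) (B A : Set V) : Prop :=
  ∃ B' : Set V, IsPSDForcingSet G B' ∧ B'.ncard = B.ncard ∧
    ∃ y ∉ A, (∃ x ∈ A, G.Adj y x) ∧ insert y A ⊆ B'ᶜ

namespace IsPSDForcingSet

variable {B A W : Set V}

theorem canExtendWhite_of_isUniqueNeighborIn (hB : IsPSDForcingSet G B) (hA : A ⊆ Bᶜ)
    (hW : WhiteClosed G B W) (hAW : Disjoint A W) {y v : V} (hy : y ∈ B)
    (hyA : ∃ x ∈ A, G.Adj y x) (hv : IsUniqueNeighborIn G W y v) : CanExtendWhite G B A := by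
  refine ⟨insert v (B \ {y}), hB.exchange hW hy hv, Set.ncard_exchange (hW.subset_compl hv.mem) hy,
    y, fun h => hA h hy, hyA, Set.insert_subset ?_ fun x hx => ?_⟩
  · simp [hv.adj.ne]
  · rintro (rfl | hxB)
    · exact Set.disjoint_left.1 hAW hx hv.mem
    · exact hA hx hxB.1

theorem canExtendWhite [Finite V] (hclaw : ClawFree G) (hB : IsPSDForcingSet G B) (hA : A ⊆ Bᶜ)
    (hW : WhiteClosed G B W) (hconn : ComponentwiseConnected G W) (hAW : Disjoint A W) {u : V}
    (hu : u ∈ B) (huA : ∃ x ∈ A, G.Adj u x) (huW : ∃ x ∈ W, G.Adj u x) :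
    CanExtendWhite G B A := by
  induction hn : W.ncard using Nat.strong_induction_on generalizing B W with
  | _ n ih =>
    obtain ⟨x, hx, hux⟩ := huW
    obtain ⟨y, hy, v, hv⟩ := hB.exists_isUniqueNeighborIn hW hconn ⟨x, hx⟩
    by_cases hyA : ∃ x ∈ A, G.Adj y x
    · exact hB.canExtendWhite_of_isUniqueNeighborIn hA hW hAW hy hyA hv
    by_cases hu_only : ∀ w ∈ W, G.Adj u w → w = v
    · have huv : IsUniqueNeighborIn G W u v := ⟨hv.mem, hu_only x hx hux ▸ hux, hu_only⟩
      exact hB.canExtendWhite_of_isUniqueNeighborIn hA hW hAW hu huA huv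
    push Not at hu_only
    obtain ⟨w, hw, huw, hwv⟩ := hu_only
    have huy : u ≠ y := fun h => hyA (h ▸ huA)
    have hcard : (insert v (B \ {y})).ncard = B.ncard :=
      Set.ncard_exchange (hW.subset_compl hv.mem) hy
    have hA' : A ⊆ (insert v (B \ {y}))ᶜ := by
      rintro a ha (rfl | haB)
      · exact Set.disjoint_left.1 hAW ha hv.mem
      · exact hA ha haB.1
    have hconn' : ComponentwiseConnected G (W \ {v}) := hconn.diff_singleton
      (hclaw.isClique_inter_neighborSet (fun h => hW.subset_compl h hy) hv)
    have hsmaller : (W \ {v}).ncard < n := hn ▸ Set.ncard_sdiff_singleton_lt_of_mem hv.mem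
    simpa only [CanExtendWhite, hcard] using ih _ hsmaller (hB.exchange hW hy hv) hA'
      (hW.exchange hv) hconn' (hAW.mono_right Set.sdiff_subset) (.inr ⟨hu, huy⟩)
      ⟨w, ⟨hw, hwv⟩, huw⟩ rfl

end IsPSDForcingSet

/-- `B` is a minimum positive semidefinite zero forcing set and `W` a componentwise connected set of
white vertices, with `W` as large as possible among all such pairs. -/
structure IsExtremalPair (G : SimpleGraph V) (B W : Set V) : Prop where
  isMin : IsMinPSDForcingSet G B
  subset_compl : W ⊆ Bᶜ
  conn : ComponentwiseConnected G W
  ncard_le : ∀ B' W', IsMinPSDForcingSet G B' → W' ⊆ B'ᶜ → ComponentwiseConnected G W' →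
    W'.ncard ≤ W.ncard

theorem exists_isExtremalPair [Finite V] (G : SimpleGraph V) : ∃ B W, IsExtremalPair G B W := by
  obtain ⟨B₀, hB₀⟩ := exists_isMinPSDForcingSet G
  obtain ⟨⟨B, W⟩, ⟨hB, hWB, hW⟩, hmax⟩ := Set.exists_max_image
    {p : Set V × Set V | IsMinPSDForcingSet G p.1 ∧ p.2 ⊆ p.1ᶜ ∧ ComponentwiseConnected G p.2}
    (fun p => p.2.ncard) (Set.toFinite _) ⟨(B₀, ∅), hB₀, Set.empty_subset _, .empty G⟩
  exact ⟨B, W, hB, hWB, hW, fun B' W' hB' hWB' hW' => hmax (B', W') ⟨hB', hWB', hW'⟩⟩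

namespace IsExtremalPair

variable [Finite V] {B W : Set V}

theorem not_componentwiseConnected_insert (h : IsExtremalPair G B W) {B' : Set V} {q : V}
    (hB' : IsMinPSDForcingSet G B') (hqW : q ∉ W) (hsub : insert q W ⊆ B'ᶜ) :
    ¬ ComponentwiseConnected G (insert q W) := by
  intro hconn
  have hle := h.ncard_le B' (insert q W) hB' hsub hconn
  rw [Set.ncard_insert_of_notMem hqW] at hle
  omega

theorem not_canExtendWhite (h : IsExtremalPair G B W) : ¬ CanExtendWhite G B W := by
  rintro ⟨B', hB', hcard, y, hyW, hy, hsub⟩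
  have hmin : IsMinPSDForcingSet G B' := ⟨hB', fun C hC => hcard ▸ h.isMin.2 C hC⟩
  exact h.not_componentwiseConnected_insert hmin hyW hsub (h.conn.insert fun _ _ _ => hy)

theorem whiteClosed (h : IsExtremalPair G B W) : WhiteClosed G B W where
  subset_compl := h.subset_compl
  mem_of_adj x hx y hyB hxy := by
    by_contra hyW
    exact h.not_canExtendWhite ⟨B, h.isMin.1, rfl, y, hyW, ⟨x, hx, hxy.symm⟩,
      Set.insert_subset hyB h.subset_compl⟩

theorem mem_of_adj (h : IsExtremalPair G B W) (hclaw : ClawFree G) {u z : V} (hu : u ∈ B)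
    (huW : ∃ x ∈ W, G.Adj u x) (huz : G.Adj u z) (hzW : z ∉ W) : z ∈ B := by
  by_contra hzB
  let c := (G.induce Bᶜ).connectedComponentMk ⟨z, hzB⟩
  have hdisj : Disjoint W (Subtype.val '' c.supp) := by
    rw [Set.disjoint_right]
    rintro _ ⟨y, hy, rfl⟩ hyW
    exact hzW (h.whiteClosed.mem_of_reachable (ConnectedComponent.exact hy) hyW)
  exact h.not_canExtendWhite (h.isMin.1.canExtendWhite hclaw h.subset_compl (.image_supp c)
    (.image_supp c) hdisj hu huW ⟨z, ⟨⟨z, hzB⟩, rfl, rfl⟩, huz⟩)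

theorem exists_adj_of_adj (h : IsExtremalPair G B W) (hclaw : ClawFree G) {a b : V} (ha : a ∉ W)
    (haW : ∃ x ∈ W, G.Adj a x) (hab : G.Adj a b) (hbW : b ∉ W) : ∃ x ∈ W, G.Adj b x := by
  by_contra! hb
  have haB : a ∈ B := by
    obtain ⟨x, hx, hax⟩ := haW
    by_contra haB
    exact ha (h.whiteClosed.mem_of_adj x hx a haB hax.symm)
  have hbB : b ∈ B := h.mem_of_adj hclaw haB haW hab hbW
  have hredundant : IsPSDForcingSet G (B \ {b}) :=
    h.isMin.1.of_subset_insert h.whiteClosed (by simp) ⟨haB, hab.ne⟩ hab hbW (fun hb' => hb'.2 rfl)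
      (fun w hw hbw => absurd hbw (hb w hw)) fun w hw haw => h.mem_of_adj hclaw haB haW haw hw
  exact (h.isMin.2 _ hredundant).not_gt (Set.ncard_sdiff_singleton_lt_of_mem hbB)

theorem eq_compl (h : IsExtremalPair G B W) (hclaw : ClawFree G) : W = Bᶜ := by
  refine h.subset_compl.antisymm fun q hqB => ?_
  by_contra hqW
  refine h.not_componentwiseConnected_insert h.isMin hqW (Set.insert_subset hqB h.subset_compl)
    (h.conn.insert fun x hx hqx => ?_)
  have hclosed : ∀ a ∈ {a | a ∈ W ∨ ∃ x ∈ W, G.Adj a x}, ∀ b, G.Adj a b →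
      b ∈ {a | a ∈ W ∨ ∃ x ∈ W, G.Adj a x} := by
    intro a ha b hab
    by_cases haW : a ∈ W
    · exact .inr ⟨a, haW, hab.symm⟩
    by_cases hbW : b ∈ W
    · exact .inl hbW
    · exact .inr (h.exists_adj_of_adj hclaw haW (ha.resolve_left haW) hab hbW)
  exact (mem_of_reachable_of_forall_adj hclosed hqx.symm (.inl hx)).resolve_left hqW

end IsExtremalPair

end

theorem connected_clawFree_Zplus_eq_Z_general {V : Type*} [Finite V] (G : SimpleGraph V)
    (hclaw : ClawFree G) : Zplus G = Z G := by
  refine le_antisymm (Zplus_le_Z G) ?_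
  obtain ⟨B, W, h⟩ := exists_isExtremalPair G
  have hstd : IsStdForcingSet G B :=
    h.isMin.1.isStdForcingSet hclaw (h.eq_compl hclaw ▸ h.conn)
  exact h.isMin.ncard_eq_Zplus ▸ Z_le_ncard hstd

/-- If `G` is a connected, claw-free finite simple graph, then `Z₊(G) = Z(G)`. -/
theorem connected_clawFree_Zplus_eq_Z {V : Type*} [Fintype V] (G : SimpleGraph V)
    (hconn : G.Connected) (hclaw : ClawFree G) : Zplus G = Z G :=
  connected_clawFree_Zplus_eq_Z_general G hclaw
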